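/- Let T ≥ 1, let H be a real inner product space, let σ : {0,…,T} → ℝ be strictly decreasing with σ_T > 0, let D_0,…,D_{T−1} ∈ H, and let x̂_0, …, x̂_T in H satisfy x̂_{i+1} = (σ_{i+1}/σ_i)·x̂_i + (1 − σ_{i+1}/σ_i)·D_i for all 0 ≤ i < T, with x̂_0 = x + σ_0·ε for some x, ε ∈ H and target x + σ_T·ε′ for some ε′ ∈ H. Then, with λ_i = σ_T/σ_{i+1} − σ_T/σ_i, the discretization error satisfies ‖x̂_T − (x + σ_T·ε′)‖² ≤ 2·Σ_{i=0}^{T−1} λ_i·‖D_i − x‖² + 2·σ_T²·‖ε − ε′‖². -/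

import Mathlib

/-!
Dividing the Euler step by the noise level makes it telescope: the increments of `(x̂ᵢ - x) / σᵢ`
are `(1 / σᵢ₊₁ - 1 / σᵢ) (Dᵢ - x)`. Multiplying by `σ_T` shows that the error
`x̂_T - (x + σ_T ε)` is the combination `∑ λᵢ (Dᵢ - x)`, whose weights are nonnegative with sum
`1 - σ_T / σ₀ ≤ 1`; Jensen's inequality, with the missing mass placed at the origin, bounds its
squared norm.
-/

open Finset

section Jensen

variable {E : Type*} [SeminormedAddCommGroup E]

theorem norm_add_sq_le_two_mul (a b : E) : ‖a + b‖ ^ 2 ≤ 2 * (‖a‖ ^ 2 + ‖b‖ ^ 2) :=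
  (pow_le_pow_left₀ (norm_nonneg _) (norm_add_le a b) 2).trans add_sq_le

theorem norm_sum_smul_pow_le_of_sum_le_one [NormedSpace ℝ E] {ι : Type*} {s : Finset ι}
    {w : ι → ℝ} {p : ℕ} (hp : p ≠ 0) (hw : ∀ i ∈ s, 0 ≤ w i) (hw_sum : ∑ i ∈ s, w i ≤ 1)
    (u : ι → E) : ‖∑ i ∈ s, w i • u i‖ ^ p ≤ ∑ i ∈ s, w i * ‖u i‖ ^ p := by
  have hconv : ConvexOn ℝ Set.univ fun v : E ↦ ‖v‖ ^ p :=
    convexOn_univ_norm.pow (fun _ _ ↦ norm_nonneg _) p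
  simpa [hp] using hconv.map_add_sum_le (v := 1 - ∑ i ∈ s, w i) (q := 0) (p := u) hw
    (sub_add_cancel _ _) (fun _ _ ↦ Set.mem_univ _) (sub_nonneg.2 hw_sum) (Set.mem_univ _)

end Jensen

section DenoisingWeight

variable {K : Type*} [Field K] {σ : ℕ → K} {T : ℕ}

/-- The weight `λᵢ = σ_T / σᵢ₊₁ - σ_T / σᵢ` of the `i`-th denoising error in the final error of
the sampler with noise schedule `σ₀, …, σ_T`. Schedules are sequences on `ℕ`, of which only the
values up to index `T` matter. -/
def denoisingWeight (σ : ℕ → K) (T i : ℕ) : K :=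
  σ T / σ (i + 1) - σ T / σ i

theorem sum_denoisingWeight (hσT : σ T ≠ 0) :
    ∑ i ∈ range T, denoisingWeight σ T i = 1 - σ T / σ 0 := by
  simp only [denoisingWeight, sum_range_sub (fun i ↦ σ T / σ i), div_self hσT]

variable [LinearOrder K] [IsStrictOrderedRing K]

theorem denoisingWeight_nonneg {i : ℕ} (hσT : 0 ≤ σ T) (hσ_pos : 0 < σ (i + 1))
    (hσ_le : σ (i + 1) ≤ σ i) : 0 ≤ denoisingWeight σ T i :=
  sub_nonneg.2 (div_le_div_of_nonneg_left hσT hσ_pos hσ_le)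

end DenoisingWeight

section EulerTrajectory

variable {K V : Type*} [Field K] [AddCommGroup V] [Module K V]
  {σ : ℕ → K} {D X : ℕ → V} {T : ℕ}

/-- The sequence `X` follows, for the first `T` steps, the Euler discretization of the diffusion
ODE with noise schedule `σ` and denoiser outputs `D`. -/
def IsEulerTrajectory (σ : ℕ → K) (D X : ℕ → V) (T : ℕ) : Prop :=
  ∀ i < T, X (i + 1) = (σ (i + 1) / σ i) • X i + (1 - σ (i + 1) / σ i) • D i

namespace IsEulerTrajectory

theorem div_smul_sub_succ (hX : IsEulerTrajectory σ D X T) {i : ℕ} (hi : i < T)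
    (hσ : σ (i + 1) ≠ 0) (c : K) (x : V) :
    (c / σ (i + 1)) • (X (i + 1) - x) - (c / σ i) • (X i - x) =
      (c / σ (i + 1) - c / σ i) • (D i - x) := by
  have hratio : c / σ i = c / σ (i + 1) * (σ (i + 1) / σ i) := (div_mul_div_cancel₀ hσ).symm
  rw [hX i hi, hratio]
  module

theorem sub_eq_smul_add_sum (hX : IsEulerTrajectory σ D X T) (hσ : ∀ i ≤ T, σ i ≠ 0) (x : V) :
    X T - x = (σ T / σ 0) • (X 0 - x) + ∑ i ∈ range T, denoisingWeight σ T i • (D i - x) := by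
  have htelescope : ∑ i ∈ range T, denoisingWeight σ T i • (D i - x) =
      (σ T / σ T) • (X T - x) - (σ T / σ 0) • (X 0 - x) := by
    rw [← sum_range_sub (fun i ↦ (σ T / σ i) • (X i - x))]
    refine sum_congr rfl fun i hi ↦ ?_
    have hiT := mem_range.1 hi
    exact (hX.div_smul_sub_succ hiT (hσ _ hiT) (σ T) x).symm
  rw [htelescope, div_self (hσ T le_rfl), one_smul, add_sub_cancel]

theorem sub_noised_eq_sum_add (hX : IsEulerTrajectory σ D X T) (hσ : ∀ i ≤ T, σ i ≠ 0)
    {x ε : V} (hX_zero : X 0 = x + σ 0 • ε) (ε' : V) :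
    X T - (x + σ T • ε') =
      ∑ i ∈ range T, denoisingWeight σ T i • (D i - x) + σ T • (ε - ε') := by
  have hnoise : (σ T / σ 0) • (X 0 - x) = σ T • ε := by
    rw [hX_zero, add_sub_cancel_left, smul_smul, div_mul_cancel₀ _ (hσ 0 T.zero_le)]
  rw [← sub_sub, hX.sub_eq_smul_add_sum hσ x, hnoise]
  module

end IsEulerTrajectory

end EulerTrajectory

theorem euler_sampler_discretization_loss_upper_bound_general
    {E : Type*} [SeminormedAddCommGroup E] [NormedSpace ℝ E] {σ : ℕ → ℝ} {D X : ℕ → E} {T : ℕ}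
    (hσ_anti : AntitoneOn σ (Set.Iic T)) (hσT : 0 < σ T) (hX : IsEulerTrajectory σ D X T)
    {x ε : E} (hX_zero : X 0 = x + σ 0 • ε) (ε' : E) :
    ‖X T - (x + σ T • ε')‖ ^ 2 ≤
      2 * (∑ i ∈ range T, denoisingWeight σ T i * ‖D i - x‖ ^ 2)
        + 2 * σ T ^ 2 * ‖ε - ε'‖ ^ 2 := by
  have hσ_pos : ∀ i ≤ T, 0 < σ i := fun i hi ↦ hσT.trans_le (hσ_anti hi Set.self_mem_Iic hi)
  have hweight_nonneg : ∀ i ∈ range T, 0 ≤ denoisingWeight σ T i := fun i hi ↦ by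
    have hiT := mem_range.1 hi
    exact denoisingWeight_nonneg hσT.le (hσ_pos _ hiT) (hσ_anti hiT.le hiT i.le_succ)
  have hweight_sum : ∑ i ∈ range T, denoisingWeight σ T i ≤ 1 := by
    rw [sum_denoisingWeight hσT.ne']
    exact sub_le_self _ (div_pos hσT (hσ_pos 0 T.zero_le)).le
  calc ‖X T - (x + σ T • ε')‖ ^ 2
      = ‖∑ i ∈ range T, denoisingWeight σ T i • (D i - x) + σ T • (ε - ε')‖ ^ 2 := by
        rw [hX.sub_noised_eq_sum_add (fun i hi ↦ (hσ_pos i hi).ne') hX_zero]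
    _ ≤ 2 * (‖∑ i ∈ range T, denoisingWeight σ T i • (D i - x)‖ ^ 2
          + ‖σ T • (ε - ε')‖ ^ 2) := norm_add_sq_le_two_mul _ _
    _ ≤ 2 * (∑ i ∈ range T, denoisingWeight σ T i * ‖D i - x‖ ^ 2
          + ‖σ T • (ε - ε')‖ ^ 2) := by
        gcongr
        exact norm_sum_smul_pow_le_of_sum_le_one two_ne_zero hweight_nonneg hweight_sum _
    _ = _ := by
        rw [norm_smul, Real.norm_of_nonneg hσT.le]
        ring

/-- Discretization-loss upper bound: the squared error of a first-order diffusion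
ODE sampler is bounded by a weighted sum of per-step denoising losses plus a noise term. -/
theorem euler_sampler_discretization_loss_upper_bound
    (T : ℕ) (hT : 1 ≤ T)
    (H : Type*) [NormedAddCommGroup H] [InnerProductSpace ℝ H]
    (σ : ℕ → ℝ)
    (hσ_anti : ∀ i j : ℕ, i < j → j ≤ T → σ j < σ i)
    (hσT : 0 < σ T)
    (D : ℕ → H) (xhat : ℕ → H)
    (hrec : ∀ i : ℕ, i < T →
      xhat (i + 1) = (σ (i + 1) / σ i) • xhat i + (1 - σ (i + 1) / σ i) • D i)
    (x ε ε' : H)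
    (hinit : xhat 0 = x + σ 0 • ε) :
    ‖xhat T - (x + σ T • ε')‖ ^ 2 ≤
      2 * (∑ i ∈ Finset.range T, (σ T / σ (i + 1) - σ T / σ i) * ‖D i - x‖ ^ 2)
        + 2 * σ T ^ 2 * ‖ε - ε'‖ ^ 2 :=
  have hσ_strictAnti : StrictAntiOn σ (Set.Iic T) := fun i _ j hj hij ↦ hσ_anti i j hij hj
  euler_sampler_discretization_loss_upper_bound_general hσ_strictAnti.antitoneOn hσT hrec hinit ε'
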